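/- arXiv:2311.05123 — 2 statements merged into one kernel-verified Lean document; each statement's English description precedes it below -/
import Mathlib

section
/- Let n ≥ 1. For every v ∈ ℂ^{n+1} one has ‖ι_n(v)‖² = (|v₀|² + ⋯ + |v_n|²)² / r_n⁴, where ι_n is the inductively defined map over ℂ described in the context. In particular, if ‖v‖ = r_n then ι_n(v) lies on the unit sphere of its codomain. -/
/-!
By induction on `n`. Write `S = |v₀|² + ⋯ + |v_{n-1}|²`, `t = |v_n|²` and `R = r_{n-1}⁴`. The
recursion (`sum_norm_sq_iota_succ`) and the induction hypothesis `‖ι_{n-1}(v')‖² = S² / R` give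
`(n+1) (n²-1) R ‖ι_n(v)‖² = (n²-1) S² + 2n(n+1) t S + (S - n t)² = n² (S + t)²`,
and `n² r_n⁴ = (n+1) (n²-1) R` by the formula for `r_n⁴`. The series over `ℕ` reduces to a finite
sum because `ι_n(v)` vanishes from index `numComp n` on.
-/

open scoped BigOperators

noncomputable section

/-- The radii `r_n` with `r_n^4 = ((n+1)/2)^2 (n-1)!`. -/
def rad (n : ℕ) : ℝ := ((((n : ℝ) + 1) / 2) ^ 2 * (Nat.factorial (n - 1) : ℝ)) ^ ((1 : ℝ) / 4)

/-- The number of (field) components of `ι_n`. -/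
def numComp : ℕ → ℕ
  | 0 => 2
  | 1 => 2
  | (m + 2) => numComp (m + 1) + (m + 2) + 1

/-- The inductively defined maps `ι_n : 𝕜^{n+1} → 𝕜^{L_n+1}` (over `𝕜 = ℂ`), recorded via
their components, written as a sequence indexed by `ℕ` that vanishes beyond the
dimension of the codomain.  Real components are embedded into `𝕜` via `algebraMap`. -/
def iota : (n : ℕ) → (Fin (n + 1) → ℂ) → ℕ → ℂ
  | 0, _, _ => 0
  | 1, v, j =>
      if j = 0 then 2 * v 0 * star (v 1)
      else if j = 1 then algebraMap ℝ ℂ (‖v 0‖ ^ 2 - ‖v 1‖ ^ 2)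
      else 0
  | (m + 2), v, j =>
      let c : ℝ := ((m : ℝ) + 3) ^ (-(1 : ℝ) / 2)
      let b : ℝ := ((((m : ℝ) + 2) ^ 2 - 1) * (rad (m + 1)) ^ 4) ^ (-(1 : ℝ) / 2)
      let a : ℝ := (2 * ((m : ℝ) + 2) * ((m : ℝ) + 3)) ^ ((1 : ℝ) / 2) * b
      if h : j < numComp (m + 1) then
        algebraMap ℝ ℂ c * iota (m + 1) (fun i => v i.castSucc) j
      else if h2 : j < numComp (m + 1) + (m + 2) then
        algebraMap ℝ ℂ (c * a) * star (v (Fin.last (m + 2))) *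
          v ⟨j - numComp (m + 1), by omega⟩
      else if j = numComp (m + 1) + (m + 2) then
        algebraMap ℝ ℂ (c * b *
          ((∑ i : Fin (m + 2), ‖v i.castSucc‖ ^ 2) - ((m : ℝ) + 2) * ‖v (Fin.last (m + 2))‖ ^ 2))
      else 0

/-- The defining identity `r_n ^ 4 = ((n+1)/2)^2 (n-1)!`, free of the fourth root. -/
lemma rad_pow_four (n : ℕ) :
    rad n ^ 4 = (((n : ℝ) + 1) / 2) ^ 2 * (Nat.factorial (n - 1) : ℝ) := by
  unfold rad
  rw [← Real.rpow_natCast, ← Real.rpow_mul (by positivity)]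
  norm_num

lemma rad_pow_four_pos (n : ℕ) : 0 < rad n ^ 4 := by
  rw [rad_pow_four]
  positivity

lemma rpow_neg_half_sq {x : ℝ} (hx : 0 ≤ x) : (x ^ (-(1 : ℝ) / 2)) ^ 2 = x⁻¹ := by
  rw [← Real.rpow_natCast, ← Real.rpow_mul hx]
  norm_num [Real.rpow_neg_one]

lemma rpow_half_sq {x : ℝ} (hx : 0 ≤ x) : (x ^ ((1 : ℝ) / 2)) ^ 2 = x := by
  rw [← Real.rpow_natCast, ← Real.rpow_mul hx]
  norm_num

lemma iota_eq_zero_of_le {n : ℕ} (v : Fin (n + 1) → ℂ) {j : ℕ} (hj : numComp n ≤ j) :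
    iota n v j = 0 := by
  match n, v with
  | 0, v => rfl
  | 1, v =>
    simp only [numComp] at hj
    rw [iota, if_neg (by omega), if_neg (by omega)]
  | m + 2, v =>
    simp only [numComp] at hj
    simp only [iota]
    rw [dif_neg (by omega), dif_neg (by omega), if_neg (by omega)]

lemma tsum_norm_sq_iota {n : ℕ} (v : Fin (n + 1) → ℂ) :
    ∑' j : ℕ, ‖iota n v j‖ ^ 2 = ∑ j ∈ Finset.range (numComp n), ‖iota n v j‖ ^ 2 := by
  refine tsum_eq_sum fun j hj => ?_
  rw [iota_eq_zero_of_le v (by simpa using hj)]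
  simp

/-- The recursion for `‖ι_n‖²`: with `S = |v₀|² + ⋯ + |v_{n-1}|²` and `t = |v_n|²`, the three
blocks of components contribute `c² ‖ι_{n-1}(v')‖²`, `c² a² t S` and `c² b² (S - n t)²`, where
`c² = 1/(n+1)`, `b² = 1/((n²-1) r_{n-1}⁴)` and `a² = 2n(n+1) b²`. -/
lemma sum_norm_sq_iota_succ (m : ℕ) (v : Fin (m + 2 + 1) → ℂ) :
    ∑ j ∈ Finset.range (numComp (m + 2)), ‖iota (m + 2) v j‖ ^ 2 =
      ((m : ℝ) + 3)⁻¹ *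
        (∑ j ∈ Finset.range (numComp (m + 1)), ‖iota (m + 1) (fun i => v i.castSucc) j‖ ^ 2 +
          ((((m : ℝ) + 2) ^ 2 - 1) * rad (m + 1) ^ 4)⁻¹ *
            (2 * ((m : ℝ) + 2) * ((m : ℝ) + 3) * ‖v (Fin.last (m + 2))‖ ^ 2 *
                (∑ i : Fin (m + 2), ‖v i.castSucc‖ ^ 2) +
              ((∑ i : Fin (m + 2), ‖v i.castSucc‖ ^ 2) -
                ((m : ℝ) + 2) * ‖v (Fin.last (m + 2))‖ ^ 2) ^ 2)) := by
  have hR : 0 ≤ (((m : ℝ) + 2) ^ 2 - 1) * rad (m + 1) ^ 4 := by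
    refine mul_nonneg ?_ (rad_pow_four_pos _).le
    nlinarith [(Nat.cast_nonneg m : (0 : ℝ) ≤ m)]
  have hc := rpow_neg_half_sq (show (0 : ℝ) ≤ (m : ℝ) + 3 by positivity)
  have hb := rpow_neg_half_sq hR
  have ha := rpow_half_sq (show (0 : ℝ) ≤ 2 * ((m : ℝ) + 2) * ((m : ℝ) + 3) by positivity)
  have h1 : ∀ j ∈ Finset.range (numComp (m + 1)), ‖iota (m + 2) v j‖ ^ 2 =
      ((m : ℝ) + 3)⁻¹ * ‖iota (m + 1) (fun i => v i.castSucc) j‖ ^ 2 := by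
    intro j hj
    simp only [iota]
    rw [dif_pos (Finset.mem_range.mp hj), norm_mul, norm_algebraMap', mul_pow, Real.norm_eq_abs,
      sq_abs, hc]
  have h2 : ∀ i : Fin (m + 2), ‖iota (m + 2) v (numComp (m + 1) + i)‖ ^ 2 =
      ((m : ℝ) + 3)⁻¹ * (2 * ((m : ℝ) + 2) * ((m : ℝ) + 3) *
        ((((m : ℝ) + 2) ^ 2 - 1) * rad (m + 1) ^ 4)⁻¹) * ‖v (Fin.last (m + 2))‖ ^ 2 *
          ‖v i.castSucc‖ ^ 2 := by
    intro i
    have hi := i.isLt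
    have hv : (⟨numComp (m + 1) + (i : ℕ) - numComp (m + 1), by omega⟩ : Fin (m + 2 + 1)) =
        i.castSucc := by
      ext
      simp
    simp only [iota]
    rw [dif_neg (by omega), dif_pos (by omega), hv, norm_mul, norm_mul, norm_algebraMap', norm_star,
      mul_pow, mul_pow, Real.norm_eq_abs, sq_abs, mul_pow, mul_pow, hc, ha, hb]
  have h3 : ‖iota (m + 2) v (numComp (m + 1) + (m + 2))‖ ^ 2 =
      ((m : ℝ) + 3)⁻¹ * ((((m : ℝ) + 2) ^ 2 - 1) * rad (m + 1) ^ 4)⁻¹ *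
        ((∑ i : Fin (m + 2), ‖v i.castSucc‖ ^ 2) -
          ((m : ℝ) + 2) * ‖v (Fin.last (m + 2))‖ ^ 2) ^ 2 := by
    simp only [iota]
    rw [dif_neg (by omega), dif_neg (by omega), if_pos trivial, norm_algebraMap', Real.norm_eq_abs,
      sq_abs, mul_pow, mul_pow, hc, hb]
  rw [show numComp (m + 2) = numComp (m + 1) + (m + 2) + 1 from rfl, Finset.sum_range_succ,
    Finset.sum_range_add, Finset.sum_congr rfl h1, h3,
    Finset.sum_range fun x => ‖iota (m + 2) v (numComp (m + 1) + x)‖ ^ 2,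
    Finset.sum_congr rfl fun i _ => h2 i, ← Finset.mul_sum, ← Finset.mul_sum]
  ring

/-- The norm formula for the finite sum over the actual components of `ι_{k+1}`. -/
lemma sum_norm_sq_iota (k : ℕ) (v : Fin (k + 1 + 1) → ℂ) :
    ∑ j ∈ Finset.range (numComp (k + 1)), ‖iota (k + 1) v j‖ ^ 2 =
      (∑ i, ‖v i‖ ^ 2) ^ 2 / rad (k + 1) ^ 4 := by
  induction k with
  | zero =>
    rw [rad_pow_four, Fin.sum_univ_two (f := fun i => ‖v i‖ ^ 2)]
    simp only [zero_add, numComp, Finset.sum_range_succ, Finset.sum_range_zero, iota,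
      if_true, one_ne_zero, if_false, norm_mul, norm_star, norm_algebraMap',
      Real.norm_eq_abs, sq_abs]
    norm_num
    ring
  | succ m ih =>
    rw [sum_norm_sq_iota_succ, ih, Fin.sum_univ_castSucc (n := m + 2)]
    generalize (∑ i : Fin (m + 2), ‖v i.castSucc‖ ^ 2) = S
    generalize ‖v (Fin.last (m + 2))‖ ^ 2 = t
    rw [rad_pow_four, rad_pow_four]
    have hm : (0 : ℝ) ≤ m := Nat.cast_nonneg m
    have hf : (0 : ℝ) < (Nat.factorial m : ℝ) := by positivity
    rw [show m + 1 + 1 - 1 = m + 1 from rfl, show m + 1 - 1 = m from rfl, Nat.factorial_succ]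
    push_cast
    generalize (Nat.factorial m : ℝ) = f at hf ⊢
    rw [show ((m : ℝ) + 2) ^ 2 - 1 = (m + 1) * (m + 3) by ring,
      show (m : ℝ) + 1 + 1 = m + 2 by ring, show (m : ℝ) + 2 + 1 = m + 3 by ring]
    field_simp
    ring

theorem norm_sq_iota_complex (n : ℕ) (hn : 1 ≤ n) (v : Fin (n + 1) → ℂ) :
    (∑' j : ℕ, ‖iota n v j‖ ^ 2) = (∑ i, ‖v i‖ ^ 2) ^ 2 / (rad n) ^ 4 ∧
      (Real.sqrt (∑ i, ‖v i‖ ^ 2) = rad n → (∑' j : ℕ, ‖iota n v j‖ ^ 2) = 1) := by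
  have key : (∑' j : ℕ, ‖iota n v j‖ ^ 2) = (∑ i, ‖v i‖ ^ 2) ^ 2 / (rad n) ^ 4 := by
    obtain ⟨k, rfl⟩ : ∃ k, n = k + 1 := ⟨n - 1, by omega⟩
    rw [tsum_norm_sq_iota, sum_norm_sq_iota]
  refine ⟨key, fun h => ?_⟩
  have hS : ∑ i, ‖v i‖ ^ 2 = rad n ^ 2 := by
    rw [← h, Real.sq_sqrt (Finset.sum_nonneg fun i _ => sq_nonneg _)]
  rw [key, hS, ← pow_mul]
  exact div_self (rad_pow_four_pos n).ne'

end
end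

section
/- Let n ≥ 1. For every λ ∈ ℂ with |λ| = 1 and every v ∈ ℂ^{n+1}, one has ι_n(λ·v) = ι_n(v), where λ·v denotes the vector with coordinates λ·v_i and ι_n is the inductively defined map over ℂ described in the context. (Hence ι_n is constant on the fibers of the Hopf quotient S^{2n+1}(r_n) → ℙ^n(ℂ).) -/
/-! Every component of `ι_n` is either a multiple of some `conj (v_i) * v_j` or a real function of
the norms `‖v_i‖`.  Under `v ↦ λ v` with `‖λ‖ = 1` the former is multiplied by `conj λ * λ = 1` and
the latter is unchanged; since `ι_n` contains `ι_{n-1}` of a truncation of `v`, invariance follows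
by induction on `n`. -/

open scoped BigOperators

noncomputable section

lemma star_mul_self_of_norm_eq_one {lam : ℂ} (hlam : ‖lam‖ = 1) : star lam * lam = 1 := by
  simpa [hlam] using Complex.conj_mul' lam

/-- `ι_n` is invariant under the diagonal action of the unit circle on `ℂ^{n+1}`,
hence constant on the fibers of the Hopf quotient `S^{2n+1}(r_n) → ℙ^n(ℂ)`. -/
theorem iota_smul_circle (n : ℕ) (hn : 1 ≤ n) (lam : ℂ) (hlam : ‖lam‖ = 1)
    (v : Fin (n + 1) → ℂ) :
    iota n (fun i => lam * v i) = iota n v := by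
  have hs := star_mul_self_of_norm_eq_one hlam
  induction n, hn using Nat.le_induction with
  | base =>
    funext j
    simp only [iota, norm_mul, hlam, one_mul, star_mul']
    congr 1
    linear_combination (2 * v 0 * star (v 1)) * hs
  | succ n hn ih =>
    obtain ⟨m, rfl⟩ : ∃ m, n = m + 1 := ⟨n - 1, by omega⟩
    funext j
    have hprev := congrFun (ih fun i => v i.castSucc) j
    simp only [iota, norm_mul, hlam, one_mul, star_mul']
    split_ifs with h1 h2 h3
    · rw [hprev]
    -- Only the factor `star lam * lam` distinguishes the two mixed components.
    · rw [mul_assoc, mul_mul_mul_comm (star lam), hs, one_mul, ← mul_assoc]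
    · rfl
    · rfl

end
end
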